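/- For every a > 0 and every z ∈ 𝔻, (1/(2π)) ∫₀^{2π} dt / |1 − z e^{−it}|^{a+1} ≤ (Γ(a) / Γ((a+1)/2)²) · (1 − |z|²)^{−a}. -/

import Mathlib

open MeasureTheory Complex Metric Set Filter
open scoped Real Topology ENNReal

noncomputable section

/-- The Poisson kernel `P(z) = (1-|z|^2)/|1-z|^2`. -/
def poissonKer (z : ℂ) : ℝ := (1 - ‖z‖ ^ 2) / ‖1 - z‖ ^ 2

/-- The Poisson integral of a boundary function `F` defined on the unit circle. -/
def poissonInt (F : ℂ → ℂ) (z : ℂ) : ℂ :=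
  (1 / (2 * π)) * ∫ t in (0:ℝ)..(2 * π),
    (poissonKer (z * Complex.exp (-(t : ℂ) * Complex.I)) : ℂ) *
      F (Complex.exp ((t : ℂ) * Complex.I))

/-- The Poisson integral of a (2π-periodic) function of the angular variable. -/
def poissonIntR (φ : ℝ → ℂ) (z : ℂ) : ℂ :=
  (1 / (2 * π)) * ∫ t in (0:ℝ)..(2 * π),
    (poissonKer (z * Complex.exp (-(t : ℂ) * Complex.I)) : ℂ) * φ t

/-- The conjugate Poisson kernel `P̃(z) = Im((1+z)/(1-z))`. -/
def conjPoissonKer (z : ℂ) : ℝ := ((1 + z) / (1 - z)).im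

/-- The conjugate Poisson integral of a function of the angular variable. -/
def conjPoissonIntR (φ : ℝ → ℂ) (z : ℂ) : ℂ :=
  (1 / (2 * π)) * ∫ t in (0:ℝ)..(2 * π),
    (conjPoissonKer (z * Complex.exp (-(t : ℂ) * Complex.I)) : ℂ) * φ t

/-- Wirtinger derivative `f_z = (1/2)(∂ₓ - i ∂_y) f`. -/
def wdz (f : ℂ → ℂ) (z : ℂ) : ℂ :=
  (1 / 2) * (fderiv ℝ f z 1 - Complex.I * fderiv ℝ f z Complex.I)

/-- Wirtinger derivative `f_z̄ = (1/2)(∂ₓ + i ∂_y) f`. -/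
def wdzb (f : ℂ → ℂ) (z : ℂ) : ℂ :=
  (1 / 2) * (fderiv ℝ f z 1 + Complex.I * fderiv ℝ f z Complex.I)

/-- The angular derivative `f_θ(z) = i (z f_z(z) - z̄ f_z̄(z))`. -/
def fTheta (f : ℂ → ℂ) (z : ℂ) : ℂ :=
  Complex.I * (z * wdz f z - (starRingEnd ℂ) z * wdzb f z)

/-- The radial derivative multiplied by `r`: `r f_r(z) = z f_z(z) + z̄ f_z̄(z)`. -/
def rFr (f : ℂ → ℂ) (z : ℂ) : ℂ :=
  z * wdz f z + (starRingEnd ℂ) z * wdzb f z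

/-- `F : 𝕋 → ℂ` is absolutely continuous with angular derivative `Ḟ = Fd`,
i.e. `t ↦ F(e^{it})` is an indefinite integral of the (locally integrable,
2π-periodic) function `Fd`. -/
def IsACDeriv (F : ℂ → ℂ) (Fd : ℝ → ℂ) : Prop :=
  (∀ a b : ℝ, IntervalIntegrable Fd MeasureTheory.volume a b) ∧
  Function.Periodic Fd (2 * π) ∧
  ∀ t : ℝ, F (Complex.exp ((t : ℂ) * Complex.I)) = F 1 + ∫ s in (0:ℝ)..t, Fd s

/-- membership in `L^p(𝕋)`, identifying `𝕋` with `[0, 2π)`. -/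
def MemLpT (p : ℝ≥0∞) (φ : ℝ → ℂ) : Prop :=
  MeasureTheory.MemLp φ p (MeasureTheory.volume.restrict (Ioc (0:ℝ) (2 * π)))

/-- The integral mean `M_p(r, g)`. -/
def Mp (p : ℝ) (g : ℂ → ℂ) (r : ℝ) : ℝ :=
  ((1 / (2 * π)) * ∫ θ in (0:ℝ)..(2 * π),
      ‖g ((r : ℂ) * Complex.exp ((θ : ℂ) * Complex.I))‖ ^ p) ^ (1 / p)

/-- The `L^p(𝕋)` norm `((1/2π) ∫ |φ|^p)^{1/p}`. -/
def lpNormT (p : ℝ) (φ : ℝ → ℂ) : ℝ :=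
  ((1 / (2 * π)) * ∫ t in (0:ℝ)..(2 * π), ‖φ t‖ ^ p) ^ (1 / p)

/-- Membership in the analytic Hardy space `H^p(𝔻)` for `p ∈ [1, ∞)`. -/
def MemHp (p : ℝ) (g : ℂ → ℂ) : Prop :=
  DifferentiableOn ℂ g (ball (0:ℂ) 1) ∧ ∃ M : ℝ, ∀ r ∈ Ioo (0:ℝ) 1, Mp p g r ≤ M

/-- Membership in `H^∞(𝔻)`: bounded analytic functions on the unit disk. -/
def MemHinf (g : ℂ → ℂ) : Prop :=
  DifferentiableOn ℂ g (ball (0:ℂ) 1) ∧ ∃ M : ℝ, ∀ z ∈ ball (0:ℂ) 1, ‖g z‖ ≤ M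

/-- Harmonicity on the unit disk: `f` is C² with vanishing Laplacian. -/
def HarmonicOnD (f : ℂ → ℂ) : Prop :=
  ContDiffOn ℝ 2 f (ball (0:ℂ) 1) ∧
  ∀ z ∈ ball (0:ℂ) 1,
    fderiv ℝ (fun w => fderiv ℝ f w 1) z 1
      + fderiv ℝ (fun w => fderiv ℝ f w Complex.I) z Complex.I = 0

/-- Membership in the harmonic Hardy space `h^p(𝔻)` for `p ∈ [1, ∞)`. -/
def Memhp (p : ℝ) (g : ℂ → ℂ) : Prop :=
  HarmonicOnD g ∧ ∃ M : ℝ, ∀ r ∈ Ioo (0:ℝ) 1, Mp p g r ≤ M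

/-- Membership in `h^∞(𝔻)`: bounded harmonic functions on the unit disk. -/
def Memhinf (g : ℂ → ℂ) : Prop :=
  HarmonicOnD g ∧ ∃ M : ℝ, ∀ z ∈ ball (0:ℂ) 1, ‖g z‖ ≤ M

/-- `L` is the value of the principal-value Hilbert transform
`(1/2π) p.v. ∫ φ(t)/tan((θ-t)/2) dt` of (the 2π-periodic) `φ` at `θ`. -/
def IsPVHilbert (φ : ℝ → ℂ) (θ : ℝ) (L : ℂ) : Prop :=
  Filter.Tendsto
    (fun ε : ℝ => (1 / (2 * π)) *
      ∫ t in Ioo (θ - π) (θ + π) \ Ioo (θ - ε) (θ + ε),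
        φ t / (Real.tan ((θ - t) / 2) : ℂ))
    (nhdsWithin 0 (Ioi 0)) (nhds L)

/-!
Write `s = (a + 1) / 2`. By Parseval, the mean of `‖(1 - zζ) ^ (-s)‖ ^ 2` over the unit circle is
`∑ cₙ(s)² |z| ^ (2n)`, where `cₙ(s) = Γ(s + n) / (Γ(s) n!)` are the coefficients of
`(1 - x) ^ (-s)`. As `s` is the midpoint of `a` and `1`, log-convexity of `Γ` gives
`Γ(s + n)² ≤ Γ(a + n) n!`, that is `cₙ(s)² ≤ Γ(a) / Γ(s)² * cₙ(a)`; summing this against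
`|z| ^ (2n)` produces `(1 - |z|²) ^ (-a)`.
-/

section Multichoose

variable {s t : ℝ}

lemma sq_Gamma_half_add_le (hs : 0 < s) (ht : 0 < t) :
    Real.Gamma ((s + t) / 2) ^ 2 ≤ Real.Gamma s * Real.Gamma t := by
  have log_convex : Real.Gamma ((s + t) / 2) ≤ √(Real.Gamma s) * √(Real.Gamma t) := by
    have h := Real.Gamma_mul_add_mul_le_rpow_Gamma_mul_rpow_Gamma hs ht
      one_half_pos one_half_pos (add_halves 1)
    rw [← Real.sqrt_eq_rpow, ← Real.sqrt_eq_rpow] at h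
    convert h using 2
    ring
  calc Real.Gamma ((s + t) / 2) ^ 2 ≤ (√(Real.Gamma s) * √(Real.Gamma t)) ^ 2 := by gcongr
    _ = Real.Gamma s * Real.Gamma t := by
      rw [mul_pow, Real.sq_sqrt (Real.Gamma_nonneg_of_nonneg hs.le),
        Real.sq_sqrt (Real.Gamma_nonneg_of_nonneg ht.le)]

lemma Gamma_add_nat_eq_Gamma_mul_ascPochhammer (hs : ∀ k : ℕ, s ≠ -k) (n : ℕ) :
    Real.Gamma (s + n) = Real.Gamma s * (ascPochhammer ℝ n).eval s := by
  induction n with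
  | zero => simp
  | succ n ih =>
    have hsn : s + n ≠ 0 := fun h => hs n (eq_neg_of_add_eq_zero_left h)
    rw [ascPochhammer_succ_eval, ← mul_assoc, ← ih, Nat.cast_succ, ← add_assoc,
      Real.Gamma_add_one hsn, mul_comm]

lemma multichoose_eq_Gamma_div (hs : ∀ k : ℕ, s ≠ -k) (n : ℕ) :
    Ring.multichoose s n = Real.Gamma (s + n) / (Real.Gamma s * n.factorial) := by
  have h := Ring.factorial_nsmul_multichoose_eq_ascPochhammer s n
  rw [Polynomial.ascPochhammer_smeval_eq_eval, nsmul_eq_mul] at h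
  have hΓ : Real.Gamma s ≠ 0 := Real.Gamma_ne_zero hs
  rw [Gamma_add_nat_eq_Gamma_mul_ascPochhammer hs, ← h]
  field_simp

lemma sq_multichoose_half_add_le (hs : 0 < s) (ht : 0 < t) (n : ℕ) :
    Ring.multichoose ((s + t) / 2) n ^ 2 ≤
      Real.Gamma s * Real.Gamma t / Real.Gamma ((s + t) / 2) ^ 2 *
        (Ring.multichoose s n * Ring.multichoose t n) := by
  have ne_neg_nat {r : ℝ} (hr : 0 < r) (k : ℕ) : r ≠ -k :=
    ((neg_nonpos.2 k.cast_nonneg).trans_lt hr).ne'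
  have hst : 0 < (s + t) / 2 := by positivity
  have log_convex : Real.Gamma ((s + t) / 2 + n) ^ 2 ≤
      Real.Gamma (s + n) * Real.Gamma (t + n) := by
    convert sq_Gamma_half_add_le (s := s + n) (t := t + n) (by positivity) (by positivity) using 3
    ring
  rw [multichoose_eq_Gamma_div (ne_neg_nat hst), multichoose_eq_Gamma_div (ne_neg_nat hs),
    multichoose_eq_Gamma_div (ne_neg_nat ht), div_pow]
  calc Real.Gamma ((s + t) / 2 + n) ^ 2 / (Real.Gamma ((s + t) / 2) * n.factorial) ^ 2
      ≤ Real.Gamma (s + n) * Real.Gamma (t + n) /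
          (Real.Gamma ((s + t) / 2) * n.factorial) ^ 2 := by gcongr
    _ = _ := by field_simp

end Multichoose

lemma hasSum_multichoose_mul_pow_rpow (s : ℝ) {x : ℝ} (hx : ‖x‖ < 1) :
    HasSum (fun n : ℕ => Ring.multichoose s n * x ^ n) ((1 - x) ^ (-s)) := by
  have h := (Real.one_div_one_sub_rpow_hasFPowerSeriesOnBall_zero s).hasSum (y := x)
    (by rwa [← ENNReal.ofReal_one, Metric.eball_ofReal, mem_ball_zero_iff])
  have hx' : 0 ≤ 1 - x := by linarith [Real.le_norm_self x]
  simpa [Real.rpow_neg hx', Ring.multichoose_eq, mul_comm,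
    FormalMultilinearSeries.ofScalars_apply_eq] using h

lemma hasSum_multichoose_mul_pow_cpow (s : ℂ) {x : ℂ} (hx : ‖x‖ < 1) :
    HasSum (fun n : ℕ => Ring.multichoose s n * x ^ n) ((1 - x) ^ (-s)) := by
  have h := (Complex.one_div_one_sub_cpow_hasFPowerSeriesOnBall_zero s).hasSum (y := x)
    (by rwa [← ENNReal.ofReal_one, Metric.eball_ofReal, mem_ball_zero_iff])
  simpa [Complex.cpow_neg, Ring.multichoose_eq, mul_comm,
    FormalMultilinearSeries.ofScalars_apply_eq] using h

lemma circleAverage_sq_norm_sum (c : ℕ → ℂ) (S : Finset ℕ) :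
    Real.circleAverage (fun ζ => ‖∑ n ∈ S, c n * ζ ^ n‖ ^ 2) 0 1 = ∑ n ∈ S, ‖c n‖ ^ 2 := by
  set p : Polynomial ℂ := ∑ n ∈ S, Polynomial.monomial n (c n) with hp
  have coeff_p (n : ℕ) : p.coeff n = if n ∈ S then c n else 0 := by
    simp [hp, Polynomial.coeff_monomial]
  have support_p : p.support ⊆ S := fun n hn => by
    by_contra hnS
    simp [coeff_p, hnS] at hn
  calc Real.circleAverage (fun ζ => ‖∑ n ∈ S, c n * ζ ^ n‖ ^ 2) 0 1
      = Real.circleAverage (fun ζ => ‖p.eval ζ‖ ^ 2) 0 1 := by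
        simp [hp, Polynomial.eval_finsetSum]
    _ = ∑ n ∈ p.support, ‖p.coeff n‖ ^ 2 := p.sum_sq_norm_coeff_eq_circleAverage.symm
    _ = ∑ n ∈ S, ‖p.coeff n‖ ^ 2 :=
        Finset.sum_subset support_p fun n _ hn => by simp [Polynomial.notMem_support_iff.1 hn]
    _ = ∑ n ∈ S, ‖c n‖ ^ 2 := Finset.sum_congr rfl fun n hn => by rw [coeff_p, if_pos hn]

lemma hasSum_sq_norm_circleAverage {c : ℕ → ℂ} {f : ℂ → ℂ}
    (hf : ∀ ζ ∈ sphere (0 : ℂ) 1, HasSum (fun n => c n * ζ ^ n) (f ζ)) :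
    HasSum (fun n => ‖c n‖ ^ 2) (Real.circleAverage (fun ζ => ‖f ζ‖ ^ 2) 0 1) := by
  have hc : Summable c := by simpa using (hf 1 (by simp)).summable
  have norm_partial_sum_le (S : Finset ℕ) (θ : ℝ) :
      ‖∑ n ∈ S, c n * circleMap 0 1 θ ^ n‖ ≤ ∑' n, ‖c n‖ :=
    calc ‖∑ n ∈ S, c n * circleMap 0 1 θ ^ n‖ ≤ ∑ n ∈ S, ‖c n‖ :=
          norm_sum_le_of_le S fun n _ => by simp
      _ ≤ ∑' n, ‖c n‖ := hc.norm.sum_le_tsum S fun n _ => norm_nonneg _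
  simp only [HasSum, ← circleAverage_sq_norm_sum]
  refine Tendsto.const_smul ?_ _
  apply intervalIntegral.tendsto_integral_filter_of_dominated_convergence
    (fun _ => (∑' n, ‖c n‖) ^ 2)
  · exact .of_forall fun S => Continuous.aestronglyMeasurable (by fun_prop)
  · refine .of_forall fun S => .of_forall fun θ _ => ?_
    rw [norm_pow, norm_norm]
    gcongr
    exact norm_partial_sum_le S θ
  · exact intervalIntegrable_const
  · exact .of_forall fun θ _ => (hf _ (circleMap_mem_sphere 0 zero_le_one θ)).norm.pow 2

lemma hasSum_circleAverage_norm_one_sub_mul_rpow (s : ℝ) {w : ℂ} (hw : ‖w‖ < 1) :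
    HasSum (fun n : ℕ => Ring.multichoose s n ^ 2 * (‖w‖ ^ 2) ^ n)
      (Real.circleAverage (fun ζ => ‖1 - w * ζ‖ ^ (-(2 * s))) 0 1) := by
  have sq_norm_cpow (u : ℂ) : ‖u ^ (-s : ℂ)‖ ^ 2 = ‖u‖ ^ (-(2 * s)) := by
    rw [← Complex.ofReal_neg, Complex.norm_cpow_real, ← Real.rpow_mul_natCast (norm_nonneg u)]
    congr 1
    push_cast
    ring
  have series_on_circle (ζ : ℂ) (hζ : ζ ∈ sphere (0 : ℂ) 1) :
      HasSum (fun n : ℕ => Ring.multichoose (s : ℂ) n * w ^ n * ζ ^ n)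
        ((1 - w * ζ) ^ (-s : ℂ)) := by
    have hwζ : ‖w * ζ‖ < 1 := by rwa [norm_mul, mem_sphere_zero_iff_norm.1 hζ, mul_one]
    simpa only [mul_pow, mul_assoc] using hasSum_multichoose_mul_pow_cpow s hwζ
  have parseval := hasSum_sq_norm_circleAverage series_on_circle
  have norm_multichoose (n : ℕ) : ‖Ring.multichoose (s : ℂ) n‖ = ‖Ring.multichoose s n‖ := by
    rw [← Complex.norm_real]
    exact congrArg norm (Ring.map_multichoose Complex.ofRealHom s n).symm
  simpa only [sq_norm_cpow, norm_mul, norm_pow, mul_pow, norm_multichoose, Real.norm_eq_abs,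
    sq_abs, pow_right_comm] using parseval

lemma circleAverage_norm_one_sub_mul_rpow_le {a : ℝ} (ha : 0 < a) {w : ℂ} (hw : ‖w‖ < 1) :
    Real.circleAverage (fun ζ => ‖1 - w * ζ‖ ^ (-(a + 1))) 0 1 ≤
      Real.Gamma a / Real.Gamma ((a + 1) / 2) ^ 2 * (1 - ‖w‖ ^ 2) ^ (-a) := by
  have hw2 : ‖‖w‖ ^ 2‖ < 1 := by
    rw [norm_pow, norm_norm]
    exact pow_lt_one₀ (norm_nonneg w) hw two_ne_zero
  have coeff_le (n : ℕ) : Ring.multichoose ((a + 1) / 2) n ^ 2 ≤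
      Real.Gamma a / Real.Gamma ((a + 1) / 2) ^ 2 * Ring.multichoose a n := by
    simpa using sq_multichoose_half_add_le ha one_pos n
  have mean := hasSum_circleAverage_norm_one_sub_mul_rpow ((a + 1) / 2) hw
  rw [mul_div_cancel₀ _ two_ne_zero] at mean
  refine hasSum_le (fun n => ?_) mean ((hasSum_multichoose_mul_pow_rpow a hw2).mul_left _)
  rw [← mul_assoc]
  gcongr
  exact coeff_le n

/-- For every `a > 0` and every `z ∈ 𝔻`,
`(1/2π) ∫₀^{2π} dt/|1 - z e^{-it}|^{a+1} ≤ (Γ(a)/Γ((a+1)/2)²) (1-|z|²)^{-a}`. -/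
theorem stmt17 (a : ℝ) (ha : 0 < a) (z : ℂ) (hz : z ∈ ball (0:ℂ) 1) :
    (1 / (2 * π)) * ∫ t in (0:ℝ)..(2 * π),
        1 / ‖1 - z * Complex.exp (-(t : ℂ) * Complex.I)‖ ^ (a + 1)
      ≤ (Real.Gamma a / Real.Gamma ((a + 1) / 2) ^ 2) * (1 - ‖z‖ ^ 2) ^ (-a) := by
  have integral_eq : (1 / (2 * π)) * ∫ t in (0:ℝ)..(2 * π),
        1 / ‖1 - z * Complex.exp (-(t : ℂ) * Complex.I)‖ ^ (a + 1) =
      Real.circleAverage (fun ζ => ‖1 - z * ζ⁻¹‖ ^ (-(a + 1))) 0 1 := by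
    simp only [Real.circleAverage_def, circleMap_zero, ofReal_one, one_mul, ← Complex.exp_neg,
      neg_mul, Real.rpow_neg (norm_nonneg _), one_div, smul_eq_mul]
  rw [integral_eq, Real.circleAverage_zero_one_congr_inv (f := fun ζ => ‖1 - z * ζ‖ ^ (-(a + 1)))]
  exact circleAverage_norm_one_sub_mul_rpow_le ha (mem_ball_zero_iff.1 hz)

end
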